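/- For every integer n ≥ 2, the number of isomorphism classes of fission chains J_1 ↠ J_2 ↠ J_3 ↠ J_4 of slope exactly 3 with n leaves such that |J_3| = 2 and at most one fiber of the map J_2 ↠ J_3 has more than one element, equals ⌊n/2⌋ + p(2) + p(3) + ⋯ + p(n−1) + 2 − n. -/

import Mathlib

/-!
A chain `J₁ ↠ J₂ ↠ J₃ ↠ J₄` with `|J₄| = 1` is determined up to isomorphism by the multiset
`FChain.inv`, which records for each node `y ∈ J₃` the multiset of the fibre sizes `|J₁ₓ|` of the
nodes `x ∈ J₂` above `y` (`inv_eq_of_iso`, `iso_of_inv_eq`). Under the hypotheses of the theorem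
the invariants that occur are exactly the unordered pairs `{{n - i}, μ}` with `1 ≤ i ≤ n - 1` and
`μ` a partition of `i` (`exists_index`, `exists_chain`). Two different pairs `(i, μ)` give the same
invariant only when both partitions have a single part, that is for `{{n - i}, {i}}`. Keeping the
one-part partition `μ = {i}` only for `2 * i ≤ n` makes the parametrisation injective (`injOn_code`),
and the index set has `∑_{i=1}^{n-1} (p(i) - 1) + ⌊n/2⌋` elements (`card_index`).
-/

/-- A fission chain of slope `≤ k` with `n` leaves: a chain of surjective maps of
finite sets `J₁ ↠ J₂ ↠ ⋯ ↠ J_{k+1}` with `|J₁| = n` and `|J_{k+1}| = 1`.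
We encode `J_{i+1} := Fin (size i)`; the chain is prolonged trivially above
height `k+1` (all later sets necessarily also have one element, since all the
maps are surjective). -/
structure FChain (k n : ℕ) where
  size : ℕ → ℕ
  map : ∀ i, Fin (size i) → Fin (size (i+1))
  surj : ∀ i, Function.Surjective (map i)
  size_zero : size 0 = n
  size_top : size k = 1

/-- A fission chain of slope `≤ k` has slope exactly `k` if `k = 0` or `|J_k| ≥ 2`
(here `J_k = Fin (size (k-1))`). -/
def FChain.ExactSlope {k n : ℕ} (c : FChain k n) : Prop :=
  k = 0 ∨ 2 ≤ c.size (k - 1)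

/-- Isomorphism of fission chains: bijections between the corresponding sets
commuting with all the maps. -/
def FChain.Iso {k n m : ℕ} (c : FChain k n) (d : FChain k m) : Prop :=
  ∃ e : ∀ i, Fin (c.size i) ≃ Fin (d.size i),
    ∀ i x, e (i+1) (c.map i x) = d.map i (e i x)

/-- `Φ(k,n)`: the number of isomorphism classes of fission chains of slope `≤ k`
with `n` leaves. -/
noncomputable def PhiBig (k n : ℕ) : ℕ :=
  Nat.card (Quot (fun c d : FChain k n => c.Iso d))

/-- `φ(k,n)`: the number of isomorphism classes of fission chains of slope
exactly `k` with `n` leaves. -/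
noncomputable def phi (k n : ℕ) : ℕ :=
  Nat.card (Quot (fun c d : {c : FChain k n // c.ExactSlope} => c.1.Iso d.1))

/-! ### Lifting bijections along maps of finite sets -/

/-- Two finite families with the same multiset of values differ by a reindexing. -/
theorem exists_equiv_of_map_eq {A B X : Type*} [Fintype A] [Fintype B]
    (f : A → X) (g : B → X)
    (h : (Finset.univ : Finset A).val.map f = (Finset.univ : Finset B).val.map g) :
    ∃ e : A ≃ B, ∀ a, g (e a) = f a := by
  classical
  have key : ∀ x, Nonempty ({a // f a = x} ≃ {b // g b = x}) := by
    intro x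
    have := congrArg (Multiset.count x) h
    rw [Multiset.count_map, Multiset.count_map] at this
    refine ⟨Fintype.equivOfCardEq ?_⟩
    rw [Fintype.card_subtype, Fintype.card_subtype]
    simpa [Finset.card_def, Finset.filter_val, eq_comm] using this
  let E := fun x => (key x).some
  refine ⟨(Equiv.sigmaFiberEquiv f).symm.trans
    ((Equiv.sigmaCongrRight E).trans (Equiv.sigmaFiberEquiv g)), fun a => ?_⟩
  exact (E (f a) ⟨a, rfl⟩).2

/-- A bijection of bases lifts to the total spaces, compatibly with weights, as soon as
corresponding fibres carry the same multiset of weights. -/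
theorem exists_lift_equiv {A A' B B' X : Type*} [Fintype A] [Fintype A']
    [DecidableEq B] [DecidableEq B']
    (f : A → B) (f' : A' → B') (w : A → X) (w' : A' → X) (e : B ≃ B')
    (h : ∀ b, (Finset.univ.filter (fun a => f a = b)).val.map w =
      (Finset.univ.filter (fun a => f' a = e b)).val.map w') :
    ∃ E : A ≃ A', ∀ a, f' (E a) = e (f a) ∧ w' (E a) = w a := by
  classical
  -- Both pairs `(position in the base, weight)` have the same multiset of values.
  obtain ⟨E, hE⟩ := exists_equiv_of_map_eq (fun a => (e (f a), w a)) (fun a => (f' a, w' a)) (by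
    ext ⟨b', x⟩
    obtain ⟨b, rfl⟩ := e.surjective b'
    have := congrArg (Multiset.count x) (h b)
    rw [Multiset.count_map, Multiset.count_map, Finset.filter_val, Finset.filter_val,
      Multiset.filter_filter, Multiset.filter_filter] at this
    rw [Multiset.count_map, Multiset.count_map]
    simpa [Prod.ext_iff, and_comm, eq_comm] using this)
  exact ⟨E, fun a => Prod.ext_iff.1 (hE a)⟩

/-! ### A complete invariant of chains of slope at most 3 -/

/-- The number of leaves above a node of `J₂`. -/
def FChain.wt {k n : ℕ} (c : FChain k n) (x : Fin (c.size 1)) : ℕ :=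
  (Finset.univ.filter (fun z : Fin (c.size 0) => c.map 0 z = x)).card

/-- The multiset of leaf counts of the nodes of `J₂` above a node of `J₃`. -/
def FChain.fib {k n : ℕ} (c : FChain k n) (y : Fin (c.size 2)) : Multiset ℕ :=
  (Finset.univ.filter (fun x : Fin (c.size 1) => c.map 1 x = y)).val.map c.wt

/-- The multiset, over the nodes of `J₃`, of the multisets `FChain.fib`; a complete invariant of
chains of slope at most `3`. -/
def FChain.inv {k n : ℕ} (c : FChain k n) : Multiset (Multiset ℕ) :=
  (Finset.univ : Finset (Fin (c.size 2))).val.map c.fib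

theorem inv_eq_of_iso {k n : ℕ} {c d : FChain k n} (h : c.Iso d) : c.inv = d.inv := by
  obtain ⟨e, he⟩ := h
  have hw : ∀ x, c.wt x = d.wt (e 1 x) := by
    intro x
    refine Finset.card_equiv (e 0) fun z => ?_
    simp only [Finset.mem_filter, Finset.mem_univ, true_and]
    rw [← he 0 z, (e (0+1)).apply_eq_iff_eq]
  have hf : ∀ y, c.fib y = d.fib (e 2 y) := by
    intro y
    unfold FChain.fib
    have : (Finset.univ.filter (fun x => d.map 1 x = e 2 y)) =
        (Finset.univ.filter (fun x => c.map 1 x = y)).map (e 1).toEmbedding := by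
      ext x
      obtain ⟨x, rfl⟩ := (e 1).surjective x
      simp only [Finset.mem_filter, Finset.mem_univ, true_and, Finset.mem_map_equiv,
        Equiv.symm_apply_apply]
      rw [← he 1 x, (e (1+1)).apply_eq_iff_eq]
    rw [this, Finset.map_val, Multiset.map_map]
    exact Multiset.map_congr rfl fun x _ => hw x
  unfold FChain.inv
  rw [← Finset.map_univ_equiv (e 2), Finset.map_val, Multiset.map_map]
  exact Multiset.map_congr rfl fun x _ => hf x

theorem size_eq_one {n : ℕ} (c : FChain 3 n) (i : ℕ) : c.size (i + 3) = 1 := by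
  induction i with
  | zero => exact c.size_top
  | succ i ih =>
    have h1 := Fintype.card_le_of_surjective _ (c.surj (i + 3))
    obtain ⟨y⟩ : Nonempty (Fin (c.size (i + 3))) := ⟨⟨0, by omega⟩⟩
    have h2 := (c.map (i + 3) y).pos
    simp only [Fintype.card_fin] at h1
    have : i + 3 + 1 = i + 1 + 3 := by omega
    rw [this] at h1 h2
    omega

/-- Chains with the same invariant are isomorphic: the bijection is lifted from the root to the
leaves one level at a time. -/
theorem iso_of_inv_eq {n : ℕ} {c d : FChain 3 n} (h : c.inv = d.inv) : c.Iso d := by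
  obtain ⟨e2, h2⟩ := exists_equiv_of_map_eq c.fib d.fib h
  obtain ⟨e1, h1⟩ := exists_lift_equiv (c.map 1) (d.map 1) c.wt d.wt e2
    (fun y => (h2 y).symm)
  obtain ⟨e0, h0⟩ := exists_lift_equiv (c.map 0) (d.map 0) (fun _ => ()) (fun _ => ()) e1 (by
    intro x
    have := (h1 x).2
    unfold FChain.wt at this
    rw [Finset.card_def, Finset.card_def] at this
    rw [Multiset.map_const', Multiset.map_const', this])
  refine ⟨fun i => match i with
    | 0 => e0
    | 1 => e1
    | 2 => e2
    | i + 3 => finCongr ((size_eq_one c i).trans (size_eq_one d i).symm), fun i x => ?_⟩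
  match i, x with
  | 0, x => exact (h0 x).1.symm
  | 1, x => exact (h1 x).1.symm
  | i + 2, x =>
    have : Subsingleton (Fin (d.size (i + 2 + 1))) := by
      have := size_eq_one d i
      rw [show i + 2 + 1 = i + 3 from rfl, this]
      infer_instance
    exact Subsingleton.elim _ _

/-! ### Constraints on the invariant -/

theorem card_inv {k n : ℕ} (c : FChain k n) : c.inv.card = c.size 2 := by
  simp [FChain.inv]

theorem countP_inv {k n : ℕ} (c : FChain k n) :
    c.inv.countP (fun P => 1 < P.card) = (Finset.univ.filter (fun y : Fin (c.size 2) =>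
      1 < (Finset.univ.filter (fun x : Fin (c.size 1) => c.map 1 x = y)).card)).card := by
  rw [FChain.inv, Multiset.countP_map, Finset.card_def, Finset.filter_val]
  simp only [FChain.fib, Multiset.card_map, Finset.card_val]

theorem sum_inv {k n : ℕ} (c : FChain k n) : (c.inv.map Multiset.sum).sum = n := by
  have h1 : (c.inv.map Multiset.sum).sum = ∑ y, ∑ x with c.map 1 x = y, c.wt x := by
    rw [FChain.inv, Multiset.map_map]
    rfl
  rw [h1, Finset.sum_fiberwise]
  have := Finset.card_eq_sum_card_fiberwise (s := Finset.univ) (t := Finset.univ) (f := c.map 0)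
    (by simp)
  rw [Finset.card_univ, Fintype.card_fin] at this
  exact this.symm.trans c.size_zero

theorem mem_inv {k n : ℕ} (c : FChain k n) {P : Multiset ℕ} (hP : P ∈ c.inv) :
    P ≠ 0 ∧ ∀ a ∈ P, 0 < a := by
  obtain ⟨y, -, rfl⟩ := Multiset.mem_map.1 hP
  constructor
  · obtain ⟨x, hx⟩ := c.surj 1 y
    have : c.wt x ∈ c.fib y := Multiset.mem_map_of_mem _ (by simpa using hx)
    intro h0
    simp [h0] at this
  · intro a ha
    obtain ⟨x, -, rfl⟩ := Multiset.mem_map.1 ha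
    obtain ⟨z, hz⟩ := c.surj 0 x
    exact Finset.card_pos.2 ⟨z, by simpa using hz⟩

/-! ### Counting the possible invariants -/

/-- Pairs `(i, μ)` with `1 ≤ i ≤ n - 1` and `μ` a partition of `i`, the one-part partition being
kept only for `2 * i ≤ n`. -/
def index (n : ℕ) : Finset (Σ i : ℕ, Nat.Partition i) :=
  (Finset.Icc 1 (n - 1)).sigma fun i =>
    Finset.univ.filter fun μ : Nat.Partition i => μ.parts ≠ {i} ∨ 2 * i ≤ n

/-- The invariant of the chain with one node of `J₃` carrying a single node with `n - i` leaves,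
and the other one carrying nodes with leaf counts the parts of `μ`. -/
def code (n : ℕ) (s : Σ i : ℕ, Nat.Partition i) : Multiset (Multiset ℕ) :=
  {{n - s.1}, s.2.parts}

theorem card_index (n : ℕ) (hn : 2 ≤ n) : (index n).card =
    n / 2 + (∑ i ∈ Finset.Icc 2 (n-1), Fintype.card (Nat.Partition i)) + 2 - n := by
  have h1 : ∀ i ∈ Finset.Icc 1 (n - 1),
      (Finset.univ.filter fun μ : Nat.Partition i => μ.parts ≠ {i} ∨ 2 * i ≤ n).card + 1 =
        Fintype.card (Nat.Partition i) + if 2 * i ≤ n then 1 else 0 := by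
    intro i hi
    have hi0 : i ≠ 0 := by
      have := Finset.mem_Icc.1 hi
      omega
    split_ifs with h
    · simp [h]
    · have : (Finset.univ.filter fun μ : Nat.Partition i => μ.parts ≠ {i} ∨ 2 * i ≤ n) =
          Finset.univ.erase (Nat.Partition.indiscrete i) := by
        ext μ
        simp [h, Nat.Partition.ext_iff, Nat.Partition.indiscrete_parts hi0]
      rw [this, Finset.card_erase_of_mem (Finset.mem_univ _), Finset.card_univ]
      have : 0 < Fintype.card (Nat.Partition i) := Fintype.card_pos
      omega
  have h2 := Finset.sum_congr rfl h1
  rw [Finset.sum_add_distrib, Finset.sum_add_distrib, ← Finset.card_filter] at h2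
  have h3 : (Finset.Icc 1 (n - 1)).filter (fun i => 2 * i ≤ n) = Finset.Icc 1 (n / 2) := by
    ext i
    simp only [Finset.mem_filter, Finset.mem_Icc]
    omega
  have h4 : Finset.Icc 1 (n - 1) = insert 1 (Finset.Icc 2 (n - 1)) := by
    ext i
    simp only [Finset.mem_insert, Finset.mem_Icc]
    omega
  have h5 : ∑ i ∈ Finset.Icc 1 (n - 1), Fintype.card (Nat.Partition i) =
      1 + ∑ i ∈ Finset.Icc 2 (n - 1), Fintype.card (Nat.Partition i) := by
    rw [h4, Finset.sum_insert (by simp)]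
    simp
  rw [h3, h5] at h2
  rw [index, Finset.card_sigma]
  simp only [Finset.sum_const, Nat.card_Icc, smul_eq_mul, mul_one] at h2
  omega

theorem injOn_code (n : ℕ) : Set.InjOn (code n) (index n) := by
  rintro ⟨i, μ⟩ h1 ⟨j, ν⟩ h2 h
  simp only [index, Finset.coe_sigma, Set.mem_sigma_iff, Finset.mem_coe, Finset.mem_Icc,
    Finset.mem_filter, Finset.mem_univ, true_and] at h1 h2
  suffices i = j ∧ μ.parts = ν.parts by
    obtain ⟨rfl, h⟩ := this
    rw [Nat.Partition.ext h]
  have hμ := μ.parts_sum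
  have hν := ν.parts_sum
  simp only [code, Multiset.insert_eq_cons] at h
  rw [Multiset.cons_eq_cons] at h
  rcases h with ⟨ha, hb⟩ | ⟨-, cs, ha, hb⟩
  · rw [Multiset.singleton_inj] at ha hb
    exact ⟨by omega, hb⟩
  · have hcs : cs = 0 := by
      have := congrArg Multiset.card ha
      simpa using this
    subst hcs
    simp only [Multiset.cons_zero, Multiset.singleton_inj] at ha hb
    -- Both partitions have one part, so `i + j = n` while `2 * i ≤ n` and `2 * j ≤ n`.
    rw [ha, Multiset.sum_singleton] at hμ
    rw [hb, Multiset.sum_singleton] at hν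
    rw [ha] at h1 ⊢
    rw [hb] at h2 ⊢
    simp only [ne_eq, Multiset.singleton_inj] at h1 h2 ⊢
    omega

/-- If at most one node of `J₃` has several nodes of `J₂` above it, some node has exactly one, and
the other carries a partition of the remaining leaves. -/
theorem exists_index {n : ℕ} (c : FChain 3 n) (h2 : c.size 2 = 2)
    (h1 : c.inv.countP (fun P => 1 < P.card) ≤ 1) : ∃ s ∈ index n, code n s = c.inv := by
  have key : ∀ P Q : Multiset ℕ, c.inv = {P, Q} → P.card ≤ 1 →
      ∃ s ∈ index n, code n s = c.inv := by
    intro P Q h hP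
    obtain ⟨hP0, hPpos⟩ := mem_inv c (P := P) (by simp [h])
    obtain ⟨hQ0, hQpos⟩ := mem_inv c (P := Q) (by simp [h])
    have hsum := sum_inv c
    obtain ⟨a, rfl⟩ : ∃ a, P = {a} := by
      rw [← Multiset.card_eq_one]
      have := Multiset.card_pos.2 hP0
      omega
    have ha : 0 < a := hPpos a (by simp)
    simp only [h, Multiset.insert_eq_cons, Multiset.map_cons, Multiset.map_singleton,
      Multiset.sum_cons, Multiset.sum_singleton] at hsum
    have hQ : 0 < Q.sum := by
      obtain ⟨b, hb⟩ := Multiset.exists_mem_of_ne_zero hQ0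
      exact (hQpos b hb).trans_le (Multiset.le_sum_of_mem hb)
    by_cases hc : Q = {Q.sum} ∧ n < 2 * Q.sum
    · -- Both nodes carry a single node and `Q` has the larger leaf count: exchange the roles.
      refine ⟨⟨a, Nat.Partition.indiscrete a⟩, ?_, ?_⟩
      · simp only [index, Finset.mem_sigma, Finset.mem_Icc, Finset.mem_filter, Finset.mem_univ,
          true_and]
        omega
      · have : n - a = Q.sum := by omega
        simp only [code, h, Nat.Partition.indiscrete_parts ha.ne', this, ← hc.1]
        exact Multiset.pair_comm _ _
    · refine ⟨⟨Q.sum, ⟨Q, fun {i} hi => hQpos i hi, rfl⟩⟩, ?_, ?_⟩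
      · simp only [index, Finset.mem_sigma, Finset.mem_Icc, Finset.mem_filter, Finset.mem_univ,
          true_and]
        refine ⟨by omega, ?_⟩
        by_contra! hcon
        exact hc ⟨hcon.1, hcon.2⟩
      · have : n - Q.sum = a := by omega
        simp only [code, h, this]
  obtain ⟨P, Q, h⟩ := Multiset.card_eq_two.1 ((card_inv c).trans h2)
  rcases Nat.lt_or_ge 1 P.card with hP | hP
  · refine key Q P (h.trans (Multiset.pair_comm _ _)) ?_
    by_contra! hQ
    rw [h, Multiset.insert_eq_cons, Multiset.countP_cons_of_pos (p := fun P : Multiset ℕ => 1 < P.card) _ hP,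
      ← Multiset.cons_zero,
      Multiset.countP_cons_of_pos (p := fun P : Multiset ℕ => 1 < P.card) _ hQ] at h1
    omega
  · exact key P Q h hP

/-! ### Realising the invariants -/

/-- The chain over a map `g : J₂ → J₃` with `|J₃| = 2`, with leaf map `f`. -/
def mkChain {n m : ℕ} (f : Fin n → Fin m) (hf : f.Surjective) (g : Fin m → Fin 2)
    (hg : g.Surjective) : FChain 3 n where
  size i := match i with
    | 0 => n
    | 1 => m
    | 2 => 2
    | _ + 3 => 1
  map i := match i with
    | 0 => f
    | 1 => g
    | _ + 2 => fun _ => (0 : Fin 1)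
  surj i := match i with
    | 0 => hf
    | 1 => hg
    | 2 => fun _ => ⟨(0 : Fin 2), Subsingleton.elim (α := Fin 1) _ _⟩
    | _ + 3 => fun _ => ⟨(0 : Fin 1), Subsingleton.elim (α := Fin 1) _ _⟩
  size_zero := rfl
  size_top := rfl

/-- Prescribed fibre sizes are realised by a map between standard finite sets. -/
theorem exists_fibers {n m : ℕ} (w : Fin m → ℕ) (hw : ∑ x, w x = n) :
    ∃ f : Fin n → Fin m, ∀ x, (Finset.univ.filter (fun z => f z = x)).card = w x := by
  subst hw
  refine ⟨fun z => (finSigmaFinEquiv.symm z).1, fun x => ?_⟩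
  rw [← Fintype.card_subtype]
  have e := (Equiv.subtypeEquiv (p := fun z => (finSigmaFinEquiv (n := w).symm z).1 = x)
    (q := fun s => s.1 = x) finSigmaFinEquiv.symm (fun _ => Iff.rfl)).trans
    (Equiv.sigmaSubtype (β := fun x => Fin (w x)) x)
  rw [Fintype.card_congr e, Fintype.card_fin]

/-- Every code is realised by placing the single node above `0 : Fin 2` and the nodes given by the
parts of the partition above `1`. -/
theorem exists_chain {n : ℕ} {s : Σ i : ℕ, Nat.Partition i} (hs : s ∈ index n) :
    ∃ c : FChain 3 n, c.size 2 = 2 ∧ c.inv = code n s := by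
  obtain ⟨i, μ⟩ := s
  simp only [index, Finset.mem_sigma, Finset.mem_Icc] at hs
  obtain ⟨l, hl⟩ : ∃ l : List ℕ, (l : Multiset ℕ) = μ.parts := ⟨μ.parts.toList, by simp⟩
  have hsum : l.sum = i := by rw [← μ.parts_sum, ← hl, Multiset.sum_coe]
  have hlen : 0 < l.length := by
    rcases l with _ | ⟨a, l⟩
    · simp at hsum
      omega
    · simp
  let w : Fin (l.length + 1) → ℕ := Fin.cons (n - i) l.get
  let g : Fin (l.length + 1) → Fin 2 := Fin.cons 0 (fun _ => 1)
  obtain ⟨f, hf⟩ := exists_fibers (n := n) w (by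
    rw [Fin.sum_univ_succ]
    simp only [w, Fin.cons_zero, Fin.cons_succ]
    have : ∑ k, l.get k = l.sum := by simp
    omega)
  have hpos : ∀ x, 0 < w x := by
    refine Fin.cases ?_ fun k => ?_
    · simp only [w, Fin.cons_zero]
      omega
    · simp only [w, Fin.cons_succ]
      exact μ.parts_pos (by rw [← hl]; exact Multiset.mem_coe.2 (l.get_mem k))
  have hfs : f.Surjective := by
    intro x
    have := hpos x
    rw [← hf, Finset.card_pos] at this
    obtain ⟨z, hz⟩ := this
    exact ⟨z, by simpa using hz⟩
  have hgs : g.Surjective := by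
    intro y
    fin_cases y
    · exact ⟨0, rfl⟩
    · exact ⟨Fin.succ ⟨0, hlen⟩, rfl⟩
  refine ⟨mkChain f hfs g hgs, rfl, ?_⟩
  have hwt : (mkChain f hfs g hgs).wt = w := funext hf
  have h0 : (mkChain f hfs g hgs).fib (0 : Fin 2) = {n - i} := by
    have : Finset.univ.filter (fun x => g x = 0) = {0} := by
      ext x
      refine Fin.cases ?_ (fun k => ?_) x <;> simp [g]
    unfold FChain.fib
    rw [hwt]
    change (Finset.univ.filter (fun x => g x = 0)).val.map w = _
    rw [this]
    rfl
  have h1 : (mkChain f hfs g hgs).fib (1 : Fin 2) = μ.parts := by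
    have : Finset.univ.filter (fun x => g x = 1) = Finset.univ.map (Fin.succEmb l.length) := by
      ext x
      refine Fin.cases ?_ (fun k => ?_) x <;> simp [g]
    unfold FChain.fib
    rw [hwt]
    change (Finset.univ.filter (fun x => g x = 1)).val.map w = _
    rw [this, Finset.map_val, Multiset.map_map, ← hl]
    have : w ∘ (Fin.succEmb l.length) = l.get := rfl
    rw [this, Fin.univ_val_map, List.ofFn_get]
  change ({(mkChain f hfs g hgs).fib (0 : Fin 2), (mkChain f hfs g hgs).fib (1 : Fin 2)} :
    Multiset (Multiset ℕ)) = _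
  rw [h0, h1, code]

/-! ### The count -/

/-- For n ≥ 2, the number of isomorphism classes of fission chains
J₁ ↠ J₂ ↠ J₃ ↠ J₄ of slope exactly 3 with n leaves such that |J₃| = 2 and at most
one fiber of J₂ ↠ J₃ has more than one element equals
⌊n/2⌋ + p(2) + ⋯ + p(n−1) + 2 − n. -/
theorem count_starshaped_equipped (n : ℕ) (hn : 2 ≤ n) :
    Nat.card (Quot (fun c d :
        {c : FChain 3 n // c.ExactSlope ∧ c.size 2 = 2 ∧
          (Finset.univ.filter (fun y : Fin (c.size 2) =>
            1 < (Finset.univ.filter (fun x : Fin (c.size 1) => c.map 1 x = y)).card)).card ≤ 1}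
      => c.1.Iso d.1)) =
    n / 2 + (∑ i ∈ Finset.Icc 2 (n-1), Fintype.card (Nat.Partition i)) + 2 - n := by
  rw [← card_index n hn]
  let S := {c : FChain 3 n // c.ExactSlope ∧ c.size 2 = 2 ∧
    (Finset.univ.filter (fun y : Fin (c.size 2) =>
      1 < (Finset.univ.filter (fun x : Fin (c.size 1) => c.map 1 x = y)).card)).card ≤ 1}
  let F : Quot (fun c d : S => c.1.Iso d.1) → Multiset (Multiset ℕ) :=
    Quot.lift (fun c => c.1.inv) fun _ _ h => inv_eq_of_iso h
  have hF : F.Injective := by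
    rintro ⟨c⟩ ⟨d⟩ h
    exact Quot.sound (iso_of_inv_eq h)
  have hr : Set.range F = ((index n).image (code n) : Finset _) := by
    ext M
    simp only [Set.mem_range, Finset.coe_image, Set.mem_image, Finset.mem_coe]
    constructor
    · rintro ⟨⟨c⟩, rfl⟩
      exact exists_index c.1 c.2.2.1 ((countP_inv c.1).trans_le c.2.2.2)
    · rintro ⟨s, hs, rfl⟩
      obtain ⟨c, h2, hc⟩ := exists_chain hs
      refine ⟨Quot.mk _ ⟨c, Or.inr h2.ge, h2, ?_⟩, hc⟩
      rw [← countP_inv, hc, code, Multiset.insert_eq_cons,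
        Multiset.countP_cons_of_neg _ (by simp)]
      exact (Multiset.countP_le_card _ _).trans_eq (Multiset.card_singleton _)
  change Nat.card (Quot (fun c d : S => c.1.Iso d.1)) = _
  rw [← Nat.card_range_of_injective hF, hr, ← Finset.card_image_of_injOn (injOn_code n)]
  simp
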